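/- For integers a, b with a > b + 1 and b ∈ {2, 3}, the MV assignment M^a V^b on the 1×(a+b+1) strip of stamps satisfies c(M^a V^b) = ab + b² − b + 1. -/

import Mathlib

/-- A crease direction: mountain or valley. -/
inductive MV : Type
  | M : MV
  | V : MV
deriving DecidableEq

/-- The value `σ(i)` of a layer ordering at face `i`, as a natural number
(`0` if `i` is out of range). -/
def faceVal {n : ℕ} (σ : Equiv.Perm (Fin n)) (i : ℕ) : ℕ :=
  if h : i < n then (σ ⟨i, h⟩ : Fin n) else 0

/-- Condition (1): the layer ordering respects the mountain–valley assignment. -/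
def MVRelations (n : ℕ) (μ : ℕ → MV) (σ : Equiv.Perm (Fin n)) : Prop :=
  ∀ i, i + 1 < n →
    if (μ i = MV.M ∧ Even i) ∨ (μ i = MV.V ∧ Odd i)
    then faceVal σ (i + 1) < faceVal σ i
    else faceVal σ i < faceVal σ (i + 1)

/-- `x` lies strictly between `lo` and `hi` (in either order). -/
def StrictlyBetween (x a b : ℕ) : Prop := min a b < x ∧ x < max a b

/-- Condition (2): no two creases on the same side cross. -/
def NoCrossings (n : ℕ) (σ : Equiv.Perm (Fin n)) : Prop :=
  ∀ i j, i + 1 < n → j + 1 < n → i % 2 = j % 2 →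
    ¬ Xor' (StrictlyBetween (faceVal σ j) (faceVal σ i) (faceVal σ (i + 1)))
           (StrictlyBetween (faceVal σ (j + 1)) (faceVal σ i) (faceVal σ (i + 1)))

/-- A valid layer ordering for the MV assignment `μ` on the `1 × n` strip. -/
def ValidLayerOrdering (n : ℕ) (μ : ℕ → MV) (σ : Equiv.Perm (Fin n)) : Prop :=
  MVRelations n μ σ ∧ NoCrossings n σ

/-- `c(μ)`: the number of valid layer orderings for `μ` on the `1 × n` strip. -/
noncomputable def foldCount (n : ℕ) (μ : ℕ → MV) : ℕ :=
  Nat.card {σ : Equiv.Perm (Fin n) // ValidLayerOrdering n μ σ}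

def RelAt (μ : ℕ → MV) (f : ℕ → ℕ) (i : ℕ) : Prop :=
  if (μ i = MV.M ∧ i % 2 = 0) ∨ (μ i = MV.V ∧ i % 2 = 1)
    then f (i + 1) < f i
    else f i < f (i + 1)

def NcAt (f : ℕ → ℕ) (i j : ℕ) : Prop :=
  StrictlyBetween (f j) (f i) (f (i + 1)) ↔ StrictlyBetween (f (j + 1)) (f i) (f (i + 1))

/-- Validity for a plain function giving the layers. -/
def VF (n : ℕ) (μ : ℕ → MV) (f : ℕ → ℕ) : Prop :=
  (∀ i, i + 1 < n → RelAt μ f i) ∧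
  (∀ i j, i + 1 < n → j + 1 < n → i % 2 = j % 2 → NcAt f i j)

theorem valid_iff (n : ℕ) (μ : ℕ → MV) (σ : Equiv.Perm (Fin n)) :
    ValidLayerOrdering n μ σ ↔ VF n μ (faceVal σ) := by
  unfold ValidLayerOrdering VF MVRelations NoCrossings RelAt NcAt
  simp only [Nat.even_iff, Nat.odd_iff]
  refine and_congr Iff.rfl (forall_congr' fun i => forall_congr' fun j => forall_congr' fun _ =>
    forall_congr' fun _ => forall_congr' fun _ => ?_)
  exact (not_congr (xor_iff_not_iff _ _)).trans not_not

def mu (a : ℕ) : ℕ → MV := fun i => if i < a then MV.M else MV.V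

theorem mu_shift (a : ℕ) : (fun i => mu (a + 1) (i + 1)) = mu a := by
  funext i
  simp [mu]

section Geometry

variable {n a : ℕ} {f : ℕ → ℕ}

theorem VF.even (h : VF n (mu a) f) {i : ℕ} (hi : i < a) (hn : i + 1 < n) (he : i % 2 = 0) :
    f (i + 1) < f i := by
  have := h.1 i hn
  rwa [RelAt, if_pos] at this
  left
  exact ⟨by simp [mu, hi], he⟩

theorem VF.odd (h : VF n (mu a) f) {i : ℕ} (hi : i < a) (hn : i + 1 < n) (he : i % 2 = 1) :
    f i < f (i + 1) := by
  have := h.1 i hn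
  rwa [RelAt, if_neg] at this
  simp [mu, hi, he]

theorem VF.nc {μ : ℕ → MV} (h : VF n μ f) {i j : ℕ} (hi : i + 1 < n) (hj : j + 1 < n)
    (hp : i % 2 = j % 2) :
    StrictlyBetween (f j) (f i) (f (i + 1)) ↔ StrictlyBetween (f (j + 1)) (f i) (f (i + 1)) :=
  h.2 i j hi hj hp

/-- Once the spiral turns inward at `i`, everything soon afterwards stays inside. -/
theorem inward (h : VF n (mu a) f) (han : a < n) : ∀ d i, i + 2 + d = a →
    StrictlyBetween (f (i + 2)) (f i) (f (i + 1)) →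
    ∀ x, i + 2 ≤ x → x < n → x + i + 1 ≤ 2 * a → StrictlyBetween (f x) (f i) (f (i + 1)) := by
  intro d
  induction d with
  | zero =>
    intro i hd hin x hx hxn hxa
    obtain rfl | rfl : x = i + 2 ∨ x = i + 2 + 1 := by omega
    · exact hin
    · exact (h.nc (i := i) (j := i + 2) (by omega) (by omega) (by omega)).1 hin
  | succ d ih =>
    intro i hd hin x hx hxn hxa
    have h3 := (h.nc (i := i) (j := i + 2) (by omega) (by omega) (by omega)).1 hin
    have key : StrictlyBetween (f (i + 1 + 2)) (f (i + 1)) (f (i + 1 + 1)) ∧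
        ∀ y, StrictlyBetween (f y) (f (i + 1)) (f (i + 1 + 1)) →
          StrictlyBetween (f y) (f i) (f (i + 1)) := by
      unfold StrictlyBetween at *
      rcases Nat.mod_two_eq_zero_or_one i with he | he
      · have e0 := h.even (i := i) (by omega) (by omega) he
        have e1 := h.odd (i := i + 1) (by omega) (by omega) (by omega)
        have e2 := h.even (i := i + 2) (by omega) (by omega) (by omega)
        simp only [Nat.add_assoc, Nat.reduceAdd] at *
        refine ⟨by omega, fun y hy => by omega⟩
      · have e0 := h.odd (i := i) (by omega) (by omega) he
        have e1 := h.even (i := i + 1) (by omega) (by omega) (by omega)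
        have e2 := h.odd (i := i + 2) (by omega) (by omega) (by omega)
        simp only [Nat.add_assoc, Nat.reduceAdd] at *
        refine ⟨by omega, fun y hy => by omega⟩
    have ih' := ih (i + 1) (by omega) key.1
    have small : ∀ y, i + 2 ≤ y → y < n → y + i + 2 ≤ 2 * a →
        StrictlyBetween (f y) (f i) (f (i + 1)) := by
      intro y h1 h2 h3
      rcases Nat.eq_or_lt_of_le h1 with rfl | h1
      · exact hin
      · exact key.2 y (ih' y (by omega) h2 (by omega))
    by_cases hx' : x + i + 2 ≤ 2 * a
    · exact small x hx hxn hx'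
    · obtain ⟨y, rfl⟩ : ∃ y, x = y + 1 := ⟨x - 1, by omega⟩
      exact (h.nc (i := i) (j := y) (by omega) (by omega) (by omega)).1
        (small y (by omega) (by omega) (by omega))

/-- While the spiral goes outward at `i`, nothing soon afterwards comes back inside. -/
theorem outward (h : VF n (mu a) f) (han : a < n)
    (inj : ∀ i j, i < n → j < n → f i = f j → i = j) : ∀ d i, i + 2 + d = a →
    ¬ StrictlyBetween (f (i + 2)) (f i) (f (i + 1)) →
    ∀ x, i + 2 ≤ x → x < n → x + i + 3 ≤ 2 * a → ¬ StrictlyBetween (f x) (f i) (f (i + 1)) := by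
  intro d
  induction d with
  | zero =>
    intro i hd hin x hx hxn hxa
    omega
  | succ d ih =>
    intro i hd hout x hx hxn hxa
    have h3 := (not_congr (h.nc (i := i) (j := i + 2) (by omega) (by omega) (by omega))).1 hout
    have n02 : f i ≠ f (i + 2) := fun e => by have := inj _ _ (by omega) (by omega) e; omega
    have n13 : f (i + 1) ≠ f (i + 3) := fun e => by
      have := inj _ _ (by omega) (by omega) e; omega
    have n03 : f i ≠ f (i + 3) := fun e => by
      have := inj _ _ (by omega) (by omega) e; omega
    by_cases hin : StrictlyBetween (f (i + 1 + 2)) (f (i + 1)) (f (i + 1 + 1))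
    · rcases Nat.lt_or_ge x (i + 4) with hx4 | hx4
      · obtain rfl | rfl : x = i + 2 ∨ x = i + 2 + 1 := by omega
        · exact hout
        · exact h3
      · have hi4 : i + 4 ≤ a ∨ i + 3 = a := by omega
        have hin4 : StrictlyBetween (f (i + 2 + 2)) (f (i + 2)) (f (i + 2 + 1)) →
            StrictlyBetween (f x) (f (i + 2)) (f (i + 2 + 1)) := by
          intro hh
          rcases hi4 with hi4 | hi4
          · exact inward h han (a - (i + 4)) (i + 2) (by omega) hh x hx4 hxn (by omega)
          · exfalso; omega
        rcases hi4 with hi4 | hi4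
        · have hin2 := (h.nc (i := i + 1) (j := i + 3) (by omega) (by omega) (by omega)).1 hin
          unfold StrictlyBetween at *
          rcases Nat.mod_two_eq_zero_or_one i with he | he
          · have e0 := h.even (i := i) (by omega) (by omega) he
            have e1 := h.odd (i := i + 1) (by omega) (by omega) (by omega)
            have e2 := h.even (i := i + 2) (by omega) (by omega) (by omega)
            have e3 := h.odd (i := i + 3) (by omega) (by omega) (by omega)
            simp only [Nat.add_assoc, Nat.reduceAdd] at *
            have := hin4 (by omega)
            omega
          · have e0 := h.odd (i := i) (by omega) (by omega) he
            have e1 := h.even (i := i + 1) (by omega) (by omega) (by omega)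
            have e2 := h.odd (i := i + 2) (by omega) (by omega) (by omega)
            have e3 := h.even (i := i + 3) (by omega) (by omega) (by omega)
            simp only [Nat.add_assoc, Nat.reduceAdd] at *
            have := hin4 (by omega)
            omega
        · exfalso; omega
    · have ih' := ih (i + 1) (by omega) hin
      have sub : ∀ y, StrictlyBetween (f y) (f i) (f (i + 1)) →
          StrictlyBetween (f y) (f (i + 1)) (f (i + 1 + 1)) := by
        unfold StrictlyBetween at *
        rcases Nat.mod_two_eq_zero_or_one i with he | he
        · have e0 := h.even (i := i) (by omega) (by omega) he
          have e1 := h.odd (i := i + 1) (by omega) (by omega) (by omega)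
          simp only [Nat.add_assoc, Nat.reduceAdd] at *
          intro y hy
          omega
        · have e0 := h.odd (i := i) (by omega) (by omega) he
          have e1 := h.even (i := i + 1) (by omega) (by omega) (by omega)
          simp only [Nat.add_assoc, Nat.reduceAdd] at *
          intro y hy
          omega
      have small : ∀ y, i + 2 ≤ y → y < n → y + i + 4 ≤ 2 * a →
          ¬ StrictlyBetween (f y) (f i) (f (i + 1)) := by
        intro y h1 h2 h3
        rcases Nat.eq_or_lt_of_le h1 with rfl | h1
        · exact hout
        · exact fun hc => ih' y (by omega) h2 (by omega) (sub y hc)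
      by_cases hx' : x + i + 4 ≤ 2 * a
      · exact small x hx hxn hx'
      · obtain ⟨y, rfl⟩ : ∃ y, x = y + 1 := ⟨x - 1, by omega⟩
        exact (not_congr (h.nc (i := i) (j := y) (by omega) (by omega) (by omega))).1
          (small y (by omega) (by omega) (by omega))

end Geometry

/-- Effect on the layer `v` of reversing the stack of `n` layers and inserting a layer at `p`. -/
def ins (n p v : ℕ) : ℕ := if n - 1 - v < p then n - 1 - v else n - 1 - v + 1

theorem faceVal_lt {n : ℕ} (σ : Equiv.Perm (Fin n)) {i : ℕ} (hi : i < n) : faceVal σ i < n := by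
  simp [faceVal, hi]

theorem faceVal_inj {n : ℕ} (σ : Equiv.Perm (Fin n)) (i j : ℕ) (hi : i < n) (hj : j < n)
    (h : faceVal σ i = faceVal σ j) : i = j := by
  simp only [faceVal, hi, hj, dif_pos] at h
  have := σ.injective (Fin.ext h)
  simpa using this

theorem faceVal_surj {n : ℕ} (σ : Equiv.Perm (Fin n)) (v : ℕ) (hv : v < n) :
    ∃ i, i < n ∧ faceVal σ i = v := by
  refine ⟨(σ.symm ⟨v, hv⟩ : Fin n), (σ.symm ⟨v, hv⟩).2, ?_⟩
  simp [faceVal]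

theorem perm_ext {n : ℕ} {σ τ : Equiv.Perm (Fin n)}
    (h : ∀ i, i < n → faceVal σ i = faceVal τ i) : σ = τ := by
  ext i
  have := h i i.2
  simpa [faceVal] using this

/-- Insert a new first face at layer `p`, on top of the reversed stack `τ`. -/
noncomputable def insPerm {n : ℕ} (p : Fin (n + 1)) (τ : Equiv.Perm (Fin n)) :
    Equiv.Perm (Fin (n + 1)) :=
  Equiv.ofBijective (Fin.cases p (fun i => p.succAbove (Fin.rev (τ i))) : Fin (n + 1) → Fin (n + 1))
    (by
      rw [← Finite.injective_iff_bijective]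
      intro i j
      refine Fin.cases ?_ (fun i => ?_) i <;> refine Fin.cases ?_ (fun j => ?_) j
      · simp
      · intro h; exact absurd h.symm (Fin.succAbove_ne _ _)
      · intro h; exact absurd h (Fin.succAbove_ne _ _)
      · intro h
        have := Fin.succAbove_right_injective h
        simpa using this)

theorem insPerm_zero {n : ℕ} (p : Fin (n + 1)) (τ : Equiv.Perm (Fin n)) :
    faceVal (insPerm p τ) 0 = p := by
  simp [faceVal, insPerm]

theorem insPerm_succ {n : ℕ} (p : Fin (n + 1)) (τ : Equiv.Perm (Fin n)) {i : ℕ} (hi : i < n) :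
    faceVal (insPerm p τ) (i + 1) = ins n p (faceVal τ i) := by
  have : (⟨i + 1, by omega⟩ : Fin (n + 1)) = Fin.succ ⟨i, hi⟩ := rfl
  simp only [faceVal, hi, dif_pos, Nat.add_lt_add_iff_right, this, insPerm, ins,
    Equiv.ofBijective_apply, Fin.cases_succ, Fin.succAbove, Fin.lt_def, Fin.val_castSucc,
    Fin.val_rev]
  have h2 := (τ ⟨i, hi⟩).2
  have e : n - ((τ ⟨i, hi⟩ : ℕ) + 1) = n - 1 - (τ ⟨i, hi⟩ : ℕ) := by omega
  rw [e]
  split_ifs <;> simp [e]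

theorem insPerm_surj {n : ℕ} (σ : Equiv.Perm (Fin (n + 1))) :
    ∃ p τ, σ = insPerm p τ := by
  have h : ∀ i : Fin n, ∃ j : Fin n, (σ 0).succAbove (Fin.rev j) = σ i.succ := by
    intro i
    obtain ⟨j, hj⟩ := Fin.exists_succAbove_eq (x := σ i.succ) (y := σ 0)
      (by intro h; exact absurd (σ.injective h) (Fin.succ_ne_zero i))
    exact ⟨Fin.rev j, by simpa using hj⟩
  choose t ht using h
  have tinj : Function.Injective t := by
    intro i j hij
    have : σ i.succ = σ j.succ := by rw [← ht, ← ht, hij]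
    simpa using σ.injective this
  refine ⟨σ 0, Equiv.ofBijective t (Finite.injective_iff_bijective.1 tinj), ?_⟩
  ext i
  refine Fin.cases ?_ (fun i => ?_) i
  · simp [insPerm]
  · simp [insPerm, ht]

theorem insPerm_inj {n : ℕ} {p q : Fin (n + 1)} {τ ρ : Equiv.Perm (Fin n)}
    (h : insPerm p τ = insPerm q ρ) : p = q ∧ τ = ρ := by
  have h0 : p = q := by
    have := insPerm_zero p τ
    rw [h, insPerm_zero] at this
    exact Fin.ext this.symm
  subst h0
  refine ⟨rfl, perm_ext fun i hi => ?_⟩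
  have h1 := insPerm_succ p τ hi
  rw [h, insPerm_succ p ρ hi] at h1
  have := faceVal_lt τ hi
  have := faceVal_lt ρ hi
  unfold ins at h1
  split_ifs at h1 <;> omega

section Shift

variable {n p : ℕ} {μ : ℕ → MV} {f g : ℕ → ℕ}

theorem shift_lt (hg : ∀ i, i < n → g i < n) (hf : ∀ i, i < n → f (i + 1) = ins n p (g i))
    {i j : ℕ} (hi : i < n) (hj : j < n) : f (i + 1) < f (j + 1) ↔ g j < g i := by
  rw [hf i hi, hf j hj]
  have := hg i hi
  have := hg j hj
  unfold ins
  split_ifs <;> omega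

theorem shift_rel (hg : ∀ i, i < n → g i < n) (hf : ∀ i, i < n → f (i + 1) = ins n p (g i))
    {i : ℕ} (hi : i + 1 < n) : RelAt μ f (i + 1) ↔ RelAt (fun i => μ (i + 1)) g i := by
  have a1 := shift_lt hg hf (i := i) (j := i + 1) (by omega) hi
  have a2 := shift_lt hg hf (i := i + 1) (j := i) hi (by omega)
  unfold RelAt
  rcases hm : μ (i + 1) with _ | _ <;> rcases Nat.mod_two_eq_zero_or_one i with he | he <;>
    have he' : (i + 1) % 2 = 1 - i % 2 := by omega
  all_goals simp [hm, he, he', a1, a2]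

theorem shift_nc (hg : ∀ i, i < n → g i < n) (hf : ∀ i, i < n → f (i + 1) = ins n p (g i))
    {i j : ℕ} (hi : i + 1 < n) (hj : j + 1 < n) : NcAt f (i + 1) (j + 1) ↔ NcAt g i j := by
  have b1 := shift_lt hg hf (i := i) (j := j) (by omega) (by omega)
  have b2 := shift_lt hg hf (i := j) (j := i) (by omega) (by omega)
  have b3 := shift_lt hg hf (i := i + 1) (j := j) (by omega) (by omega)
  have b4 := shift_lt hg hf (i := j) (j := i + 1) (by omega) (by omega)
  have b5 := shift_lt hg hf (i := i) (j := j + 1) (by omega) (by omega)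
  have b6 := shift_lt hg hf (i := j + 1) (j := i) (by omega) (by omega)
  have b7 := shift_lt hg hf (i := i + 1) (j := j + 1) (by omega) (by omega)
  have b8 := shift_lt hg hf (i := j + 1) (j := i + 1) (by omega) (by omega)
  simp only [NcAt, StrictlyBetween, min_lt_iff, lt_max_iff, b1, b2, b3, b4, b5, b6, b7, b8]
  rw [and_comm, and_comm (a := g (j + 1) < g i ∨ _)]

/-- Removing the first face preserves validity. -/
theorem VF_tail (hg : ∀ i, i < n → g i < n) (hf : ∀ i, i < n → f (i + 1) = ins n p (g i))
    (h : VF (n + 1) μ f) : VF n (fun i => μ (i + 1)) g :=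
  ⟨fun i hi => (shift_rel hg hf hi).1 (h.1 (i + 1) (by omega)),
   fun i j hi hj hij => (shift_nc hg hf hi hj).1 (h.2 (i + 1) (j + 1) (by omega) (by omega)
    (by omega))⟩

/-- Inserting a first face. -/
theorem VF_cons (hg : ∀ i, i < n → g i < n) (hf : ∀ i, i < n → f (i + 1) = ins n p (g i))
    (h : VF n (fun i => μ (i + 1)) g) (h0 : 0 < n → RelAt μ f 0)
    (hl : ∀ j, j < n → j % 2 = 0 → NcAt f 0 j) (hr : ∀ j, j + 1 < n → (j + 1) % 2 = 0 → NcAt f (j + 1) 0) :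
    VF (n + 1) μ f := by
  constructor
  · intro i hi
    rcases i with _ | i
    · exact h0 (by omega)
    · exact (shift_rel hg hf (by omega)).2 (h.1 i (by omega))
  · intro i j hi hj hij
    rcases i with _ | i
    · exact hl j (by omega) (by omega)
    · rcases j with _ | j
      · exact hr i (by omega) (by omega)
      · exact (shift_nc hg hf (by omega) (by omega)).2 (h.2 i j (by omega) (by omega) (by omega))

end Shift

def A (n a : ℕ) : Set (Equiv.Perm (Fin n)) := {σ | VF n (mu a) (faceVal σ)}

def Z (n a : ℕ) : Set (Equiv.Perm (Fin n)) :=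
  {σ | VF n (mu a) (faceVal σ) ∧ faceVal σ 2 < faceVal σ 0}

/-- The layer directly above the (reversed) first face. -/
def adj {n : ℕ} (τ : Equiv.Perm (Fin n)) : Fin (n + 1) := ⟨n - faceVal τ 0, by omega⟩

theorem relAt_zero {a : ℕ} {f : ℕ → ℕ} (h : f 1 < f 0) : RelAt (mu (a + 1)) f 0 := by
  simpa [RelAt, mu] using h

theorem adj_mem {n a : ℕ} (hn : 0 < n) {τ : Equiv.Perm (Fin n)} (h : τ ∈ A n a) :
    insPerm (adj τ) τ ∈ A (n + 1) (a + 1) := by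
  have hlt := faceVal_lt τ hn
  have e0 := insPerm_zero (adj τ) τ
  have e1 := insPerm_succ (adj τ) τ hn
  have hadj : ((adj τ : Fin (n + 1)) : ℕ) = n - faceVal τ 0 := rfl
  have key : faceVal (insPerm (adj τ) τ) 0 = faceVal (insPerm (adj τ) τ) 1 + 1 := by
    rw [zero_add] at e1
    rw [e0, e1, hadj]
    unfold ins
    split_ifs <;> omega
  have inj := faceVal_inj (insPerm (adj τ) τ)
  refine VF_cons (fun i => faceVal_lt τ) (fun i => insPerm_succ (adj τ) τ) ?_ ?_ ?_ ?_
  · rw [mu_shift]; exact h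
  · intro _
    exact relAt_zero (by omega)
  · intro j hj _
    unfold NcAt StrictlyBetween
    rw [zero_add]
    constructor <;> intro _ <;> exfalso <;> omega
  · intro j hj hj2
    have n1 := inj 0 (j + 1) (by omega) (by omega)
    have n2 := inj 1 (j + 1) (by omega) (by omega)
    have n3 := inj 0 (j + 1 + 1) (by omega) (by omega)
    have n4 := inj 1 (j + 1 + 1) (by omega) (by omega)
    unfold NcAt StrictlyBetween
    rw [zero_add]
    constructor <;> intro _ <;> omega

theorem sb_zero {n a : ℕ} {f : ℕ → ℕ} (ha : 2 ≤ a) (han : a < n) (h : VF n (mu a) f)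
    (h2 : f 2 < f 0) : StrictlyBetween (f (0 + 2)) (f 0) (f (0 + 1)) := by
  have := h.odd (i := 1) (by omega) (by omega) rfl
  have := h.even (i := 0) (by omega) (by omega) rfl
  simp only [StrictlyBetween, zero_add, Nat.reduceAdd] at *
  omega

theorem Z_max {n a : ℕ} (ha : 2 ≤ a) (han : a < n) (hna : n ≤ 2 * a) {τ : Equiv.Perm (Fin n)}
    (h : τ ∈ Z n a) : faceVal τ 0 = n - 1 := by
  obtain ⟨h, h2⟩ := h
  obtain ⟨x, hx, hxv⟩ := faceVal_surj τ (n - 1) (by omega)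
  have e0 := h.even (i := 0) (by omega) (by omega) rfl
  have hlt := faceVal_lt τ (i := 0) (by omega)
  rcases x with _ | _ | x
  · exact hxv
  · simp only [zero_add] at *; omega
  · have := inward h han (a - 2) 0 (by omega) (sb_zero ha han h h2) (x + 1 + 1) (by omega) hx
      (by omega)
    simp only [StrictlyBetween, zero_add] at *
    omega

theorem last_mem {n a : ℕ} (ha : 2 ≤ a) (han : a < n) (hna : n ≤ 2 * a)
    {τ : Equiv.Perm (Fin n)} (h : τ ∈ Z n a) :
    insPerm (Fin.last n) τ ∈ Z (n + 1) (a + 1) := by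
  have hmax := Z_max ha han hna h
  have hn : 0 < n := by omega
  have e0 := insPerm_zero (Fin.last n) τ
  have e1 := insPerm_succ (Fin.last n) τ hn
  rw [Fin.val_last] at e0
  have key : faceVal (insPerm (Fin.last n) τ) 1 = 0 := by
    rw [zero_add] at e1
    rw [e1, Fin.val_last]
    unfold ins
    split_ifs <;> omega
  have inj := faceVal_inj (insPerm (Fin.last n) τ)
  have bd := fun i hi => faceVal_lt (insPerm (Fin.last n) τ) (i := i) hi
  refine ⟨VF_cons (fun i => faceVal_lt τ) (fun i => insPerm_succ (Fin.last n) τ) ?_ ?_ ?_ ?_, ?_⟩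
  · rw [mu_shift]; exact h.1
  · intro _
    exact relAt_zero (by omega)
  · intro j hj hj2
    have n1 := inj 0 j (by omega) (by omega)
    have n2 := inj 1 j (by omega) (by omega)
    have n3 := inj 0 (j + 1) (by omega) (by omega)
    have n4 := inj 1 (j + 1) (by omega) (by omega)
    have b1 := bd j (by omega)
    have b2 := bd (j + 1) (by omega)
    unfold NcAt StrictlyBetween
    rw [zero_add]
    rcases j with _ | _ | j
    · simp only [zero_add]; omega
    · exfalso; omega
    · omega
  · intro j hj hj2
    have b1 := bd (j + 1) (by omega)
    have b2 := bd (j + 1 + 1) (by omega)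
    unfold NcAt StrictlyBetween
    rw [zero_add]
    omega
  · have := bd 2 (by omega)
    have n3 := inj 0 2 (by omega) (by omega)
    omega

theorem A_cases {n a : ℕ} (ha : 2 ≤ a) (han : a < n) (hna : n + 1 ≤ 2 * a)
    {p : Fin (n + 1)} {τ : Equiv.Perm (Fin n)} (h : insPerm p τ ∈ A (n + 1) (a + 1)) :
    τ ∈ A n a ∧ ((p = Fin.last n ∧ τ ∈ Z n a) ∨
      (p = adj τ ∧ faceVal (insPerm p τ) 0 < faceVal (insPerm p τ) 2)) := by
  have hτ : τ ∈ A n a := by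
    have := VF_tail (fun i => faceVal_lt τ) (fun i => insPerm_succ p τ) h
    rwa [mu_shift] at this
  refine ⟨hτ, ?_⟩
  have e0 := insPerm_zero p τ
  have hf := fun i hi => insPerm_succ p τ (i := i) hi
  have inj := faceVal_inj (insPerm p τ)
  have surj := faceVal_surj (insPerm p τ)
  have r0 := VF.even h (i := 0) (by omega) (by omega) rfl
  have r1 := VF.odd h (i := 1) (by omega) (by omega) rfl
  have h02 := inj 0 2 (by omega) (by omega)
  have hp := p.2
  rcases Nat.lt_or_ge (faceVal (insPerm p τ) 2) (faceVal (insPerm p τ) 0) with hc | hc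
  · left
    have hin := inward h (by omega) (a - 1) 0 (by omega) (sb_zero (by omega) (by omega) h hc)
    refine ⟨?_, hτ, ?_⟩
    · obtain ⟨x, hx, hxv⟩ := surj n (by omega)
      apply Fin.ext
      rw [Fin.val_last]
      rcases x with _ | _ | x
      · omega
      · simp only [zero_add] at *; omega
      · have := hin (x + 1 + 1) (by omega) hx (by omega)
        simp only [StrictlyBetween, zero_add] at *
        omega
    · rw [← shift_lt (fun i => faceVal_lt τ) hf (by omega) (by omega)]
      have := hin 3 (by omega) (by omega) (by omega)
      simp only [StrictlyBetween, zero_add, Nat.reduceAdd] at *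
      omega
  · right
    have hc : faceVal (insPerm p τ) 0 < faceVal (insPerm p τ) 2 := by omega
    refine ⟨?_, hc⟩
    have hout := outward h (by omega) inj (a - 1) 0 (by omega) (by
      simp only [StrictlyBetween, zero_add, Nat.reduceAdd] at *
      omega)
    have key : faceVal (insPerm p τ) 0 = faceVal (insPerm p τ) 1 + 1 := by
      by_contra hne
      obtain ⟨x, hx, hxv⟩ := surj (faceVal (insPerm p τ) 1 + 1) (by
        simp only [zero_add] at *
        omega)
      rcases x with _ | _ | x
      · omega
      · simp only [zero_add] at *; omega
      · have := hout (x + 1 + 1) (by omega) hx (by omega)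
        simp only [StrictlyBetween, zero_add] at *
        omega
    have e1 := hf 0 (by omega)
    have hlt := faceVal_lt τ (i := 0) (by omega)
    apply Fin.ext
    change (p : ℕ) = n - faceVal τ 0
    unfold ins at e1
    simp only [zero_add] at *
    split_ifs at e1 <;> omega

theorem Z_step {n a : ℕ} (ha : 2 ≤ a) (han : a < n) (hna : n + 1 ≤ 2 * a) :
    (Z (n + 1) (a + 1)).ncard = (Z n a).ncard := by
  have : Z (n + 1) (a + 1) = (insPerm (Fin.last n)) '' Z n a := by
    ext σ
    constructor
    · rintro ⟨h, h2⟩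
      obtain ⟨p, τ, rfl⟩ := insPerm_surj σ
      obtain ⟨-, ⟨rfl, hz⟩ | ⟨-, hc⟩⟩ := A_cases ha han hna h
      · exact ⟨τ, hz, rfl⟩
      · omega
    · rintro ⟨τ, hz, rfl⟩
      exact last_mem ha han (by omega) hz
  rw [this, Set.ncard_image_of_injective]
  intro x y h
  exact (insPerm_inj h).2

theorem A_step {n a : ℕ} (ha : 2 ≤ a) (han : a < n) (hna : n + 1 ≤ 2 * a) :
    (A (n + 1) (a + 1)).ncard = (A n a).ncard + (Z n a).ncard := by
  have : A (n + 1) (a + 1) =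
      (fun τ => insPerm (adj τ) τ) '' A n a ∪ (insPerm (Fin.last n)) '' Z n a := by
    ext σ
    constructor
    · intro h
      obtain ⟨p, τ, rfl⟩ := insPerm_surj σ
      obtain ⟨hτ, ⟨rfl, hz⟩ | ⟨rfl, hc⟩⟩ := A_cases ha han hna h
      · exact Or.inr ⟨τ, hz, rfl⟩
      · exact Or.inl ⟨τ, hτ, rfl⟩
    · rintro (⟨τ, hτ, rfl⟩ | ⟨τ, hz, rfl⟩)
      · exact adj_mem (by omega) hτ
      · exact (last_mem ha han (by omega) hz).1
  rw [this, Set.ncard_union_eq _ (Set.toFinite _) (Set.toFinite _),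
    Set.ncard_image_of_injective, Set.ncard_image_of_injective]
  · intro x y h
    exact (insPerm_inj h).2
  · intro x y h
    exact (insPerm_inj h).2
  · rw [Set.disjoint_left]
    rintro _ ⟨τ, hτ, rfl⟩ ⟨ρ, hρ, he⟩
    obtain ⟨h1, -⟩ := insPerm_inj he
    have h1 := congrArg Fin.val h1
    change n = n - faceVal τ 0 at h1
    have := VF.even hτ (i := 0) (by omega) (by omega) rfl
    omega

theorem count_all {n a c d : ℕ} (ha : 2 ≤ a) (han : a < n) (hna : n + 1 ≤ 2 * a)
    (hA : (A n a).ncard = c) (hZ : (Z n a).ncard = d) (m : ℕ) :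
    (A (n + m) (a + m)).ncard = c + d * m ∧ (Z (n + m) (a + m)).ncard = d := by
  induction m with
  | zero => simp [hA, hZ]
  | succ m ih =>
    rw [← Nat.add_assoc, ← Nat.add_assoc, A_step (by omega) (by omega) (by omega),
      Z_step (by omega) (by omega) (by omega), ih.1, ih.2]
    exact ⟨by ring, rfl⟩

/-! Enumeration of the base cases. -/

instance (μ : ℕ → MV) (f : ℕ → ℕ) (i : ℕ) : Decidable (RelAt μ f i) := by
  unfold RelAt; infer_instance

instance (x a b : ℕ) : Decidable (StrictlyBetween x a b) := by
  unfold StrictlyBetween; infer_instance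

instance (f : ℕ → ℕ) (i j : ℕ) : Decidable (NcAt f i j) := by
  unfold NcAt; infer_instance

/-- Boolean test of validity. -/
def chk (n : ℕ) (μ : ℕ → MV) (f : ℕ → ℕ) : Bool :=
  (List.range (n - 1)).all (fun i => decide (RelAt μ f i) &&
    (List.range (n - 1)).all (fun j => !(i % 2 == j % 2) || decide (NcAt f i j)))

theorem chk_iff (n : ℕ) (μ : ℕ → MV) (f : ℕ → ℕ) : chk n μ f = true ↔ VF n μ f := by
  simp only [chk, List.all_eq_true, List.mem_range, Bool.and_eq_true, decide_eq_true_eq,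
    Bool.or_eq_true, Bool.not_eq_true', beq_eq_false_iff_ne]
  constructor
  · intro h
    refine ⟨fun i hi => (h i (by omega)).1, fun i j hi hj hij => ?_⟩
    exact ((h i (by omega)).2 j (by omega)).resolve_left (fun hne => hne hij)
  · intro h i hi
    refine ⟨h.1 i (by omega), fun j hj => ?_⟩
    by_cases hij : i % 2 = j % 2
    · exact Or.inr (h.2 i j (by omega) (by omega) hij)
    · exact Or.inl hij

def cands : ℕ → (ℕ → MV) → List (List ℕ)
  | 0, _ => [[]]
  | n + 1, μ => (cands n (fun i => μ (i + 1))).flatMap fun l =>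
      ((List.range (n + 1)).map fun p => p :: l.map (ins n p)).filter
        fun l' => chk (n + 1) μ (fun i => l'.getD i 0)

def toL {n : ℕ} (σ : Equiv.Perm (Fin n)) : List ℕ := (List.range n).map (faceVal σ)

theorem toL_getD {n : ℕ} (σ : Equiv.Perm (Fin n)) : (fun i => (toL σ).getD i 0) = faceVal σ := by
  funext i
  by_cases hi : i < n
  · simp [toL, hi]
  · simp [toL, hi, faceVal]

theorem toL_inj {n : ℕ} : Function.Injective (toL (n := n)) := by
  intro σ τ h
  apply perm_ext
  intro i _
  rw [← toL_getD, ← toL_getD, h]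

theorem toL_ins {n : ℕ} (p : Fin (n + 1)) (τ : Equiv.Perm (Fin n)) :
    toL (insPerm p τ) = (p : ℕ) :: (toL τ).map (ins n p) := by
  unfold toL
  rw [List.range_succ_eq_map, List.map_cons, insPerm_zero, List.map_map, List.map_map]
  congr 1
  apply List.map_congr_left
  intro i hi
  exact insPerm_succ p τ (List.mem_range.1 hi)

theorem mem_cands (n : ℕ) : ∀ (μ : ℕ → MV) (l : List ℕ),
    l ∈ cands n μ ↔ ∃ σ : Equiv.Perm (Fin n), VF n μ (faceVal σ) ∧ toL σ = l := by
  induction n with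
  | zero =>
    intro μ l
    simp only [cands, List.mem_singleton]
    constructor
    · rintro rfl
      exact ⟨1, ⟨fun i hi => by omega, fun i j hi => by omega⟩, rfl⟩
    · rintro ⟨σ, -, rfl⟩
      rfl
  | succ n ih =>
    intro μ l
    simp only [cands, List.mem_flatMap, List.mem_filter, List.mem_map, List.mem_range, chk_iff, ih]
    constructor
    · rintro ⟨_, ⟨τ, hτ, rfl⟩, ⟨p, hp, rfl⟩, hv⟩
      have e := toL_ins ⟨p, hp⟩ τ
      simp only at e
      rw [← e, toL_getD] at hv
      exact ⟨_, hv, e⟩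
    · rintro ⟨σ, hσ, rfl⟩
      obtain ⟨p, τ, rfl⟩ := insPerm_surj σ
      refine ⟨toL τ, ⟨τ, VF_tail (fun i => faceVal_lt τ) (fun i => insPerm_succ p τ) hσ, rfl⟩,
        ⟨p, p.2, (toL_ins p τ).symm⟩, ?_⟩
      rw [toL_getD]
      exact hσ

theorem A_ncard {n a c : ℕ} (hd : (cands n (mu a)).Nodup) (hc : (cands n (mu a)).length = c) :
    (A n a).ncard = c := by
  rw [← hc, ← List.toFinset_card_of_nodup hd, ← Set.ncard_coe_finset,
    ← Set.ncard_image_of_injective _ toL_inj]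
  congr 1
  ext l
  simp [mem_cands, A]

theorem Z_ncard {n a c : ℕ} (hd : (cands n (mu a)).Nodup)
    (hc : ((cands n (mu a)).filter (fun l => decide (l.getD 2 0 < l.getD 0 0))).length = c) :
    (Z n a).ncard = c := by
  rw [← hc, ← List.toFinset_card_of_nodup (hd.filter _), ← Set.ncard_coe_finset,
    ← Set.ncard_image_of_injective _ toL_inj]
  congr 1
  ext l
  simp only [Set.mem_image, Z, Set.mem_setOf_eq, List.coe_toFinset, List.mem_filter, mem_cands,
    decide_eq_true_eq]
  constructor
  · rintro ⟨σ, ⟨h, h2⟩, rfl⟩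
    refine ⟨⟨σ, h, rfl⟩, ?_⟩
    rw [← toL_getD] at h2
    exact h2
  · rintro ⟨⟨σ, h, rfl⟩, h2⟩
    refine ⟨σ, ⟨h, ?_⟩, rfl⟩
    rw [← toL_getD]
    exact h2

theorem nodup2 : (cands 7 (mu 4)).Nodup := by decide +kernel
theorem A2 : (A 7 4).ncard = 11 := A_ncard nodup2 (by decide +kernel)
theorem Z2 : (Z 7 4).ncard = 2 := Z_ncard nodup2 (by decide +kernel)
theorem nodup3 : (cands 9 (mu 5)).Nodup := by decide +kernel
theorem A3 : (A 9 5).ncard = 22 := A_ncard nodup3 (by decide +kernel)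
theorem Z3 : (Z 9 5).ncard = 3 := Z_ncard nodup3 (by decide +kernel)

theorem foldCount_eq (n a : ℕ) :
    foldCount n (fun i => if i < a then MV.M else MV.V) = (A n a).ncard := by
  unfold foldCount
  rw [← Nat.card_coe_set_eq]
  exact Nat.card_congr (Equiv.subtypeEquivRight fun σ => valid_iff n (mu a) σ)

/-- Theorem: for `a > b + 1` and `b ∈ {2, 3}`, the assignment `M^a V^b` on the
`1 × (a+b+1)` strip folds in `ab + b² − b + 1` ways. -/
theorem stmt2 (a b : ℕ) (hab : b + 1 < a) (hb : b = 2 ∨ b = 3) :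
    foldCount (a + b + 1) (fun i => if i < a then MV.M else MV.V) =
      a * b + b ^ 2 - b + 1 := by
  rw [foldCount_eq]
  rcases hb with rfl | rfl
  · obtain ⟨m, rfl⟩ : ∃ m, a = 4 + m := ⟨a - 4, by omega⟩
    have := (count_all (by omega) (by omega) (by omega) A2 Z2 m).1
    rw [show 4 + m + 2 + 1 = 7 + m by omega, this]
    omega
  · obtain ⟨m, rfl⟩ : ∃ m, a = 5 + m := ⟨a - 5, by omega⟩
    have := (count_all (by omega) (by omega) (by omega) A3 Z3 m).1
    rw [show 5 + m + 3 + 1 = 9 + m by omega, this]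
    omega
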